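/- There is an absolute constant C such that every convex polygon in ℝ² all of whose vertices are points of ℤ² and whose perimeter is L has at most C L^{2/3} vertices. -/

import Mathlib

/-!
Each vertex `v` of the polygon is the unique maximiser of a linear functional (`exists_support`).
Split the vertices into four classes according to the signs of the coefficients of that functional.
Inside one class the vertices form a chain, monotone in both coordinates, whose consecutive
difference vectors are pairwise distinct lattice vectors. The `ℓ¹`-lengths of these vectors
telescope to at most the sum of the two coordinate widths, which is at most `2 L` because the
perimeter `L` dominates each width (`width_le`). There are at most `r ^ 2` lattice vectors of length
at most `r` in an open quadrant, and at most `2 L / r` steps longer than `r` (`chain_card`); the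
choice `r ≈ L ^ (1/3)` gives `O(L ^ (2/3))` vertices, using `L ≥ 1` (`one_le_perimeter`).

Only the two widths of the polygon enter, so no description of its edges is needed beyond the fact
that its frontier has finite length (`frontier_measure_ne_top`).
-/


open MeasureTheory Set

noncomputable section

abbrev E2 := EuclideanSpace ℝ (Fin 2)

/-- The embedding of an integer vector into the Euclidean plane. -/
def ek (k : Fin 2 → ℤ) : E2 := (WithLp.equiv 2 (Fin 2 → ℝ)).symm fun i => (k i : ℝ)

/-! ### Counting the vertices in one quadrant -/

/-- `Q` models the vertices whose supporting functional has both coefficients nonnegative, with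
integer coordinates `x`, `y` spread over at most `L`. Along `Q`, ordered by `x - y`, the
coordinate `x` increases and `y` decreases. Convexity makes the steps between consecutive vertices
pairwise distinct vectors, so at most `r ^ 2` of them have `ℓ¹`-length at most `r`; since the
`ℓ¹`-lengths add up to at most `2 * L`, at most `2 * L / r` of them are longer. -/
theorem chain_card {α : Type*} (Q : Finset α) (x y : α → ℤ) (L : ℝ) (hL : 0 ≤ L)
    (hx : ∀ v ∈ Q, ∀ w ∈ Q, ((x v : ℝ) - x w) ≤ L) (hy : ∀ v ∈ Q, ∀ w ∈ Q, ((y v : ℝ) - y w) ≤ L)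
    (hQ : ∀ v ∈ Q, ∃ a b : ℝ, 0 ≤ a ∧ 0 ≤ b ∧
      ∀ w ∈ Q, w ≠ v → a * x w + b * y w < a * x v + b * y v) (r : ℕ) (hr : 0 < r) :
    (Q.card : ℝ) ≤ 1 + (r : ℝ) ^ 2 + 2 * L / r := by
  have anti : ∀ v ∈ Q, ∀ w ∈ Q, v ≠ w → x v ≤ x w → y w < y v := by
    intro v hv w hw hne hxx
    by_contra! h
    obtain ⟨a, b, ha, hb, hab⟩ := hQ v hv
    have h1 := hab w hw hne.symm
    have h2 : (x v : ℝ) ≤ x w := by exact_mod_cast hxx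
    have h3 : (y v : ℝ) ≤ y w := by exact_mod_cast h
    nlinarith [mul_le_mul_of_nonneg_left h2 ha, mul_le_mul_of_nonneg_left h3 hb]
  set g : α → ℤ := fun v => x v - y v with hg
  have gmono : ∀ v ∈ Q, ∀ w ∈ Q, g v < g w → x v < x w ∧ y w < y v := by
    intro v hv w hw hlt
    have hne : v ≠ w := by rintro rfl; exact lt_irrefl _ hlt
    rcases le_total (x v) (x w) with h | h
    · have h1 := anti v hv w hw hne h
      refine ⟨lt_of_le_of_ne h fun he => ?_, h1⟩
      exact lt_asymm h1 (anti w hw v hv hne.symm he.ge)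
    · have h1 := anti w hw v hv hne.symm h
      simp only [hg] at hlt
      omega
  have ginj : Set.InjOn g Q := by
    intro v hv w hw he
    by_contra hne
    simp only [hg] at he
    rcases le_total (x v) (x w) with h | h
    · have h1 := anti v hv w hw hne h
      omega
    · have h1 := anti w hw v hv (Ne.symm hne) h
      omega
  obtain ⟨m, hm⟩ : ∃ m, Q.card = m := ⟨_, rfl⟩
  rcases Nat.eq_zero_or_pos m with h0 | hpos
  · rw [hm, h0]; push_cast; positivity
  have hT : (Q.image g).card = m := by rw [Finset.card_image_of_injOn ginj, hm]
  have hu : ∀ i : Fin m, ∃ v ∈ Q, g v = (Q.image g).orderEmbOfFin hT i := fun i =>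
    Finset.mem_image.1 (Finset.orderEmbOfFin_mem _ hT i)
  choose u' hu'Q hu'g using hu
  obtain ⟨u, hu⟩ : ∃ u : ℕ → α, ∀ i (h : i < m), u i = u' ⟨i, h⟩ :=
    ⟨fun i => if h : i < m then u' ⟨i, h⟩ else u' ⟨0, hpos⟩, fun i h => by simp [h]⟩
  have huQ : ∀ i, i < m → u i ∈ Q := fun i h => by rw [hu i h]; exact hu'Q _
  have hug : ∀ i j, i < j → j < m → g (u i) < g (u j) := fun i j hij hj => by
    rw [hu i (hij.trans hj), hu j hj, hu'g, hu'g]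
    exact (OrderEmbedding.lt_iff_lt _).2 hij
  -- Two equal steps would violate the strict decrease of the slopes along the chain.
  have hdist : ∀ i j, i < j → j + 1 < m → x (u (i+1)) - x (u i) = x (u (j+1)) - x (u j) →
      y (u i) - y (u (i+1)) = y (u j) - y (u (j+1)) → False := by
    intro i j hij hj ex ey
    have a1 := gmono _ (huQ i (by omega)) _ (huQ (i+1) (by omega)) (hug _ _ (by omega) (by omega))
    obtain ⟨a, b, ha, hb, hab⟩ := hQ _ (huQ j (by omega))
    have ne : ∀ k l, k < m → l < m → k ≠ l → u k ≠ u l := by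
      intro k l hk hl hkl he
      rcases lt_or_gt_of_ne hkl with h | h
      · have := hug _ _ h hl; rw [he] at this; exact lt_irrefl _ this
      · have := hug _ _ h hk; rw [he] at this; exact lt_irrefl _ this
    have b1 := hab _ (huQ (j+1) hj) (ne _ _ hj (by omega) (by omega))
    have ex' : (x (u (i+1)) : ℝ) - x (u i) = x (u (j+1)) - x (u j) := by exact_mod_cast ex
    have ey' : (y (u i) : ℝ) - y (u (i+1)) = y (u j) - y (u (j+1)) := by exact_mod_cast ey
    rcases Nat.eq_or_lt_of_le (show i + 1 ≤ j from hij) with h | h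
    -- Two adjacent equal steps: `u (i+1)` is the midpoint of its neighbours.
    · subst h
      have b2 := hab _ (huQ i (by omega)) (ne _ _ (by omega) (by omega) (by omega))
      have : a * ((x (u (i+1)) : ℝ) - x (u i)) - b * ((y (u i) : ℝ) - y (u (i+1))) =
        a * (x (u (i+1+1)) - x (u (i+1))) - b * (y (u (i+1)) - y (u (i+1+1))) := by rw [ex', ey']
      linarith
    · have a2 := gmono _ (huQ (i+1) (by omega)) _ (huQ j (by omega)) (hug _ _ h (by omega))
      have b2 := hab _ (huQ (i+1) (by omega)) (ne _ _ (by omega) (by omega) (by omega))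
      obtain ⟨c, d, hc, hd, hcd⟩ := hQ _ (huQ (i+1) (by omega))
      have b3 := hcd _ (huQ i (by omega)) (ne _ _ (by omega) (by omega) (by omega))
      have b4 := hcd _ (huQ j (by omega)) (ne _ _ (by omega) (by omega) (by omega))
      obtain ⟨p, hp⟩ : ∃ p : ℝ, p = (x (u (i+1)) : ℝ) - x (u i) := ⟨_, rfl⟩
      obtain ⟨q, hq⟩ : ∃ q : ℝ, q = (y (u i) : ℝ) - y (u (i+1)) := ⟨_, rfl⟩
      obtain ⟨s, hs⟩ : ∃ s : ℝ, s = (x (u j) : ℝ) - x (u (i+1)) := ⟨_, rfl⟩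
      obtain ⟨t, ht⟩ : ∃ t : ℝ, t = (y (u (i+1)) : ℝ) - y (u j) := ⟨_, rfl⟩
      have p0 : 0 < p := by rw [hp]; exact_mod_cast sub_pos.2 a1.1
      have q0 : 0 < q := by rw [hq]; exact_mod_cast sub_pos.2 a1.2
      have s0 : 0 < s := by rw [hs]; exact_mod_cast sub_pos.2 a2.1
      have t0 : 0 < t := by rw [ht]; exact_mod_cast sub_pos.2 a2.2
      have c1 : a * p < b * q := by rw [hp, hq, ex', ey']; linarith
      have c2 : b * t < a * s := by rw [ht, hs]; linarith
      have c3 : d * q < c * p := by rw [hp, hq]; linarith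
      have c4 : c * s < d * t := by rw [ht, hs]; linarith
      -- The functional at `u j` gives `t / s < q / p`; the one at `u (i+1)` gives `q / p < t / s`.
      have a0 : 0 < a := by nlinarith [mul_nonneg hb t0.le]
      have d0 : 0 < d := by nlinarith [mul_nonneg hc s0.le]
      have b0 : 0 < b := by nlinarith [mul_nonneg ha p0.le]
      have c0 : 0 < c := by nlinarith [mul_nonneg hd q0.le]
      have e1 : p * t < q * s := by
        have := mul_lt_mul'' c1 c2 (by positivity) (by positivity)
        have h' : (a * b) * (p * t) < (a * b) * (q * s) := by linarith
        exact lt_of_mul_lt_mul_left h' (by positivity)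
      have e2 : q * s < p * t := by
        have := mul_lt_mul'' c3 c4 (by positivity) (by positivity)
        have h' : (c * d) * (q * s) < (c * d) * (p * t) := by linarith
        exact lt_of_mul_lt_mul_left h' (by positivity)
      linarith
  set S := (Finset.range (m-1)).filter (fun i => g (u (i+1)) - g (u i) ≤ r) with hS
  set B := (Finset.range (m-1)).filter (fun i => ¬ (g (u (i+1)) - g (u i) ≤ r)) with hB
  have hSB : S.card + B.card = m - 1 := by
    rw [hS, hB, Finset.card_filter_add_card_filter_not, Finset.card_range]
  have hScard : S.card ≤ r * r := by
    have : S.card ≤ (Finset.Icc (1:ℤ) r ×ˢ Finset.Icc (1:ℤ) r).card := by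
      apply Finset.card_le_card_of_injOn
        (fun i => (x (u (i+1)) - x (u i), y (u i) - y (u (i+1))))
      · intro i hi
        simp only [hS, Finset.coe_filter, Finset.mem_range, Set.mem_ofPred_eq] at hi
        have a1 := gmono _ (huQ i (by omega)) _ (huQ (i+1) (by omega))
          (hug _ _ (by omega) (by omega))
        simp only [hg] at hi
        simp only [Finset.coe_product, Finset.coe_Icc, Set.mem_prod, Set.mem_Icc]
        omega
      · intro i hi j hj he
        simp only [hS, Finset.coe_filter, Finset.mem_range, Set.mem_ofPred_eq] at hi hj
        simp only [Prod.mk.injEq] at he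
        by_contra hne
        rcases lt_or_gt_of_ne hne with h | h
        · exact hdist i j h (by omega) he.1 he.2
        · exact hdist j i h (by omega) he.1.symm he.2.symm
    simpa using this
  have hBcard : (B.card : ℝ) * r ≤ 2 * L := by
    have h1 : (B.card : ℤ) * r ≤ ∑ i ∈ Finset.range (m-1), (g (u (i+1)) - g (u i)) := by
      calc (B.card : ℤ) * r = ∑ i ∈ B, (r : ℤ) := by simp
        _ ≤ ∑ i ∈ B, (g (u (i+1)) - g (u i)) := by
          apply Finset.sum_le_sum
          intro i hi
          simp only [hB, Finset.mem_filter] at hi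
          omega
        _ ≤ _ := by
          apply Finset.sum_le_sum_of_subset_of_nonneg (Finset.filter_subset _ _)
          intro i hi _
          have := hug i (i+1) (by omega) (by simp at hi; omega)
          omega
    rw [Finset.sum_range_sub (fun i => g (u i))] at h1
    have h2 : (B.card : ℝ) * r ≤ ((g (u (m-1)) - g (u 0) : ℤ) : ℝ) := by exact_mod_cast h1
    have h3 := hx _ (huQ (m-1) (by omega)) _ (huQ 0 hpos)
    have h4 := hy _ (huQ 0 hpos) _ (huQ (m-1) (by omega))
    simp only [hg] at h2
    push_cast at h2
    linarith
  have hr' : (0:ℝ) < r := by exact_mod_cast hr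
  have hB' : (B.card : ℝ) ≤ 2 * L / r := by rwa [le_div_iff₀ hr']
  have hS' : (S.card : ℝ) ≤ (r:ℝ)^2 := by rw [sq]; exact_mod_cast hScard
  have : (m : ℝ) = S.card + B.card + 1 := by
    have : m = S.card + B.card + 1 := by omega
    exact_mod_cast this
  rw [hm, this]
  linarith

/-! ### Length of the frontier and supporting functionals -/

@[simp] theorem ek_apply (k : Fin 2 → ℤ) (i : Fin 2) : ek k i = (k i : ℝ) := rfl

/-- By Carathéodory, a point of a planar polytope is a strictly positive combination of affinely
independent points of `s`. If there are three of them the point is interior to their triangle; so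
for a frontier point there are at most two. -/
theorem frontier_subset_segments (s : Set E2) (hs : s.Finite) :
    frontier (convexHull ℝ s) ⊆ ⋃ p ∈ s, ⋃ q ∈ s, segment ℝ p q := by
  intro x hx
  rw [(hs.isClosed_convexHull ℝ).frontier_eq] at hx
  obtain ⟨ι, _, z, w, hz, hind, hw, hw1, rfl⟩ := eq_pos_convex_span_of_mem_convexHull hx.1
  have hcard : Fintype.card ι ≤ 3 := by
    have h1 := hind.card_le_finrank_succ
    have h2 := Submodule.finrank_le (vectorSpan ℝ (Set.range z))
    rw [finrank_euclideanSpace_fin] at h2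
    omega
  rcases Nat.eq_or_lt_of_le hcard with h3 | h3
  · exfalso
    have htop : affineSpan ℝ (Set.range z) = ⊤ :=
      hind.affineSpan_eq_top_iff_card_eq_finrank_add_one.2 (by rw [h3, finrank_euclideanSpace_fin])
    let b : AffineBasis ι ℝ E2 := ⟨z, hind, htop⟩
    apply hx.2
    apply interior_mono (convexHull_mono hz)
    have hb := b.interior_convexHull
    have hbz : (b : ι → E2) = z := rfl
    rw [hbz] at hb
    rw [hb]
    intro i
    have : ∑ i, w i • z i = Finset.univ.affineCombination ℝ b w := by
      rw [Finset.affineCombination_eq_linear_combination _ _ _ hw1]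
      rfl
    rw [this, b.coord_apply_combination_of_mem (Finset.mem_univ i) hw1]
    exact hw i
  · have hmem : ∀ i, z i ∈ s := fun i => hz ⟨i, rfl⟩
    have : ∃ i j, ∀ k : ι, k = i ∨ k = j := by
      have hpos : 0 < Fintype.card ι := by
        rw [Fintype.card_pos_iff]
        by_contra h
        rw [not_nonempty_iff] at h
        simp at hw1
      rcases (by omega : Fintype.card ι = 1 ∨ Fintype.card ι = 2) with h | h
      · obtain ⟨i, hi⟩ := Fintype.card_eq_one_iff.1 h
        exact ⟨i, i, fun k => Or.inl (hi k)⟩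
      · have h' : (Finset.univ : Finset ι).card = 2 := h
        classical
        obtain ⟨i, j, -, hij⟩ := Finset.card_eq_two.1 h'
        refine ⟨i, j, fun k => ?_⟩
        have := Finset.mem_univ k
        rw [hij] at this
        simpa using this
    obtain ⟨i, j, hij⟩ := this
    simp only [Set.mem_iUnion]
    refine ⟨z i, hmem i, z j, hmem j, ?_⟩
    apply (convex_segment (𝕜 := ℝ) (z i) (z j)).sum_mem (fun i _ => (hw i).le) hw1
    intro k _
    rcases hij k with rfl | rfl
    · exact left_mem_segment _ _ _
    · exact right_mem_segment _ _ _

/-- Guards against the junk value `(⊤ : ℝ≥0∞).toReal = 0` for the perimeter. -/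
theorem frontier_measure_ne_top (s : Set E2) (hs : s.Finite) :
    μH[1] (frontier (convexHull ℝ s)) ≠ ⊤ := by
  refine ne_top_of_le_ne_top ?_ (measure_mono (frontier_subset_segments s hs))
  refine (measure_biUnion_lt_top hs fun p _ => ?_).ne
  refine measure_biUnion_lt_top hs fun q _ => ?_
  rw [hausdorffMeasure_segment]
  exact edist_lt_top _ _

/-- The perimeter is at least the width of the polygon in either coordinate direction: the
coordinate projection is `1`-Lipschitz and already the frontier covers the projection of the
polygon. -/
theorem width_le (s : Set E2) (hs : s.Finite) (i : Fin 2) (p q : E2)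
    (hp : p ∈ convexHull ℝ s) (hq : q ∈ convexHull ℝ s) :
    q i - p i ≤ (μH[1] (frontier (convexHull ℝ s))).toReal := by
  set K := convexHull ℝ s with hK
  have hlip : LipschitzWith 1 (fun z : E2 => z i) := by
    apply LipschitzWith.of_dist_le_mul
    intro x y
    rw [NNReal.coe_one, one_mul, Real.dist_eq, dist_eq_norm]
    exact PiLp.norm_apply_le (x - y) i
  have hbdd : Bornology.IsBounded K := (hs.isCompact_convexHull ℝ).isBounded
  have hsub : Set.Icc (p i) (q i) ⊆ (fun z : E2 => z i) '' frontier K := by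
    intro t ht
    have hcont : ContinuousOn (fun z : E2 => z i) K := hlip.continuous.continuousOn
    obtain ⟨z, hzK, hzt⟩ :=
      (convex_convexHull ℝ s).isPreconnected.intermediate_value hp hq hcont ht
    -- The line through `z` in the other coordinate direction leaves the bounded set, hence it
    -- crosses the frontier.
    obtain ⟨j, hj⟩ : ∃ j : Fin 2, j ≠ i := exists_ne i
    set e : E2 := EuclideanSpace.single j 1 with he
    set φ : ℝ → E2 := fun c => z + c • e with hφ
    have hφc : Continuous φ := by fun_prop
    have hne : (frontier (φ ⁻¹' K)).Nonempty := by
      rw [nonempty_frontier_iff]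
      refine ⟨⟨0, by simpa [hφ] using hzK⟩, fun huniv => ?_⟩
      obtain ⟨R, hR⟩ := hbdd.exists_norm_le
      have h1 : φ (R + 1 - z j) ∈ K := by
        have := Set.mem_univ (R + 1 - z j)
        rwa [← huniv] at this
      have h2 := (PiLp.norm_apply_le (φ (R + 1 - z j)) j).trans (hR _ h1)
      have h3 : φ (R + 1 - z j) j = R + 1 := by simp [hφ, he]
      rw [h3, Real.norm_eq_abs] at h2
      linarith [le_abs_self (R + 1)]
    obtain ⟨c, hc⟩ := hne
    refine ⟨φ c, hφc.frontier_preimage_subset K hc, ?_⟩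
    have : e i = 0 := by simp [he, hj.symm]
    simp only at hzt
    simp [hφ, this, hzt]
  have h1 : μH[1] (Set.Icc (p i) (q i)) ≤ μH[1] (frontier K) := by
    refine (measure_mono hsub).trans ?_
    simpa using hlip.hausdorffMeasure_image_le (d := 1) zero_le_one (frontier K)
  rw [hausdorffMeasure_real, Real.volume_Icc] at h1
  exact (ENNReal.ofReal_le_iff_le_toReal (frontier_measure_ne_top s hs)).1 h1

/-- A vertex of the polygon is the unique maximiser over `V` of some linear functional. -/
theorem exists_support (V : Finset (Fin 2 → ℤ)) (v : Fin 2 → ℤ)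
    (hv : ek v ∈ Set.extremePoints ℝ (convexHull ℝ (ek '' (V : Set (Fin 2 → ℤ))))) :
    ∃ a b : ℝ, ∀ w ∈ V, w ≠ v → a * w 0 + b * w 1 < a * v 0 + b * v 1 := by
  rw [(convex_convexHull ℝ _).mem_extremePoints_iff_mem_sdiff_convexHull_sdiff] at hv
  set s : Set E2 := ek '' (V : Set (Fin 2 → ℤ)) with hs
  have hfin : (s \ {ek v}).Finite := (V.finite_toSet.image ek).subset Set.sdiff_subset
  have hnot : ek v ∉ convexHull ℝ (s \ {ek v}) := fun h =>
    hv.2 (convexHull_mono (Set.sdiff_subset_sdiff_left (subset_convexHull ℝ s)) h)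
  obtain ⟨f, c, hfs, hfv⟩ :=
    geometric_hahn_banach_closed_point (convex_convexHull ℝ _) (hfin.isClosed_convexHull ℝ) hnot
  have hf : ∀ k : Fin 2 → ℤ, f (ek k) =
      f (EuclideanSpace.single 0 1) * k 0 + f (EuclideanSpace.single 1 1) * k 1 := by
    intro k
    have : ek k = (k 0 : ℝ) • EuclideanSpace.single (0 : Fin 2) (1 : ℝ) +
        (k 1 : ℝ) • EuclideanSpace.single (1 : Fin 2) (1 : ℝ) := by
      ext i
      fin_cases i <;> simp
    rw [this, map_add, map_smul, map_smul, smul_eq_mul, smul_eq_mul, mul_comm, mul_comm (k 1 : ℝ)]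
  refine ⟨f (EuclideanSpace.single 0 1), f (EuclideanSpace.single 1 1), fun w hw hne => ?_⟩
  rw [← hf w, ← hf v]
  refine (hfs _ (subset_convexHull ℝ _ ⟨⟨w, hw, rfl⟩, fun h => hne ?_⟩)).trans hfv
  ext i
  have := congrArg (fun z : E2 => z i) (Set.mem_singleton_iff.1 h)
  simpa using this

theorem one_le_perimeter (V : Finset (Fin 2 → ℤ))
    (hinterior : (interior (convexHull ℝ (ek '' (V : Set (Fin 2 → ℤ))))).Nonempty) :
    1 ≤ (μH[1] (frontier (convexHull ℝ (ek '' (V : Set (Fin 2 → ℤ)))))).toReal := by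
  have hfin : (ek '' (V : Set (Fin 2 → ℤ))).Finite := V.finite_toSet.image ek
  by_cases hV : (V : Set (Fin 2 → ℤ)).Subsingleton
  · exfalso
    rcases hV.eq_empty_or_singleton with h | ⟨v, h⟩
    · rw [h] at hinterior; simp at hinterior
    · rw [h] at hinterior; simp at hinterior
  · rw [Set.not_subsingleton_iff] at hV
    obtain ⟨v, hv, w, hw, hne⟩ := hV
    obtain ⟨i, hi⟩ := Function.ne_iff.1 hne
    have hv' := subset_convexHull ℝ _ (Set.mem_image_of_mem ek hv)
    have hw' := subset_convexHull ℝ _ (Set.mem_image_of_mem ek hw)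
    rcases lt_or_gt_of_ne hi with h | h
    · have := width_le _ hfin i _ _ hv' hw'
      have h' : (v i : ℝ) + 1 ≤ w i := by exact_mod_cast h
      simp only [ek_apply] at this
      linarith
    · have := width_le _ hfin i _ _ hw' hv'
      have h' : (w i : ℝ) + 1 ≤ v i := by exact_mod_cast h
      simp only [ek_apply] at this
      linarith

/-! ### The vertex bound -/

/-- a result of Andrews: there is an absolute constant `C` such that every
convex polygon in the plane whose vertices are lattice points and whose perimeter is `L`
has at most `C L^{2/3}` vertices.  A convex polygon is the boundary of a compact
two-dimensional convex polytope `K` (the convex hull of a finite set of lattice points with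
nonempty interior); its vertices are the extreme points of `K`, and its perimeter is the
one-dimensional Hausdorff measure of `frontier K`. -/
theorem statement13 :
    ∃ C : ℝ, 0 < C ∧ ∀ V : Finset (Fin 2 → ℤ), ∀ K : Set E2,
      K = convexHull ℝ (ek '' ↑V) → (interior K).Nonempty →
      (Nat.card (Set.extremePoints ℝ K) : ℝ) ≤
        C * (μH[1] (frontier K)).toReal ^ ((2 : ℝ) / 3) := by
  refine ⟨28, by norm_num, ?_⟩
  rintro V K rfl hinterior
  classical
  have hfin : (ek '' (V : Set (Fin 2 → ℤ))).Finite := V.finite_toSet.image ek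
  have hL1 := one_le_perimeter V hinterior
  set K := convexHull ℝ (ek '' (V : Set (Fin 2 → ℤ))) with hK
  set L := (μH[1] (frontier K)).toReal with hL
  have hwidth : ∀ v ∈ V, ∀ w ∈ V, ∀ i, ((v i : ℝ) - w i) ≤ L := fun v hv w hw i =>
    width_le _ hfin i (ek w) (ek v) (subset_convexHull ℝ _ (Set.mem_image_of_mem ek hw))
      (subset_convexHull ℝ _ (Set.mem_image_of_mem ek hv))
  set P := V.filter (fun v => ek v ∈ Set.extremePoints ℝ K) with hP
  have hcardP : Nat.card (Set.extremePoints ℝ K) ≤ P.card := by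
    have hsub : Set.extremePoints ℝ K ⊆ ((P.image ek : Finset E2) : Set E2) := by
      intro z hz
      obtain ⟨v, hv, rfl⟩ := extremePoints_convexHull_subset hz
      simp only [Finset.coe_image]
      exact ⟨v, by simp only [hP, Finset.coe_filter]; exact ⟨hv, hz⟩, rfl⟩
    have := Set.ncard_le_ncard hsub (Finset.finite_toSet _)
    rw [Set.ncard_coe_finset] at this
    exact this.trans Finset.card_image_le
  have hsupp : ∀ v : Fin 2 → ℤ, ∃ ab : ℝ × ℝ, v ∈ P → ∀ w ∈ V, w ≠ v →
      ab.1 * w 0 + ab.2 * w 1 < ab.1 * v 0 + ab.2 * v 1 := by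
    intro v
    by_cases hv : v ∈ P
    · obtain ⟨a, b, h⟩ := exists_support V v (Finset.mem_filter.1 hv).2
      exact ⟨(a, b), fun _ => h⟩
    · exact ⟨0, fun h => absurd h hv⟩
  choose ab hab using hsupp
  -- The threshold `r ≈ L ^ (1/3)` balances the terms `r ^ 2` and `L / r` of `chain_card`.
  obtain ⟨r, hr0, hr1, hr2⟩ : ∃ r : ℕ, 0 < r ∧ L ^ ((1 : ℝ) / 3) ≤ r ∧
      (r : ℝ) ≤ 2 * L ^ ((1 : ℝ) / 3) := by
    have h1 : 1 ≤ L ^ ((1 : ℝ) / 3) := Real.one_le_rpow hL1 (by norm_num)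
    refine ⟨⌈L ^ ((1 : ℝ) / 3)⌉₊, Nat.ceil_pos.2 (by linarith), Nat.le_ceil _, ?_⟩
    have := Nat.ceil_lt_add_one (show 0 ≤ L ^ ((1 : ℝ) / 3) by linarith)
    linarith
  have hbound : 1 + (r : ℝ) ^ 2 + 2 * L / r ≤ 7 * L ^ ((2 : ℝ) / 3) := by
    have hL0 : 0 < L := by linarith
    obtain ⟨c, hc⟩ : ∃ c, c = L ^ ((1 : ℝ) / 3) := ⟨_, rfl⟩
    have hc1 : 1 ≤ c := hc ▸ Real.one_le_rpow hL1 (by norm_num)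
    have h2 : L ^ ((2 : ℝ) / 3) = c ^ 2 := by
      rw [hc, ← Real.rpow_natCast, ← Real.rpow_mul hL0.le]; norm_num
    have h3 : L = c ^ 3 := by
      rw [hc, ← Real.rpow_natCast, ← Real.rpow_mul hL0.le]; norm_num
    rw [← hc] at hr1 hr2
    have hr' : (0 : ℝ) < r := by exact_mod_cast hr0
    have h4 : 2 * L / r ≤ 2 * c ^ 2 := by
      rw [div_le_iff₀ hr', h3]
      nlinarith [mul_le_mul_of_nonneg_left hr1 (sq_nonneg c)]
    rw [h2]
    nlinarith
  -- Reflecting the coordinates by the signs `σ`, `τ` of the functional reduces each of the four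
  -- quadrants of functionals to the nonnegative one.
  have key : ∀ σ τ : ℤ, σ ^ 2 = 1 → τ ^ 2 = 1 →
      ((P.filter fun v => 0 ≤ (ab v).1 * σ ∧ 0 ≤ (ab v).2 * τ).card : ℝ)
        ≤ 7 * L ^ ((2 : ℝ) / 3) := by
    intro σ τ hσ hτ
    have hwid : ∀ ρ : ℤ, ρ ^ 2 = 1 → ∀ i, ∀ v ∈ V, ∀ w ∈ V,
        (((ρ * v i : ℤ) : ℝ) - (ρ * w i : ℤ)) ≤ L := by
      intro ρ hρ i v hv w hw
      rcases (show ρ = 1 ∨ ρ = -1 from by simpa using hρ) with rfl | rfl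
      · simpa using hwidth v hv w hw i
      · have := hwidth w hw v hv i
        push_cast
        linarith
    refine (chain_card _ (fun v => σ * v 0) (fun v => τ * v 1) L (by linarith)
      ?_ ?_ ?_ r hr0).trans hbound
    · intro v hv w hw
      simp only [Finset.mem_filter, hP] at hv hw
      exact hwid σ hσ 0 v hv.1.1 w hw.1.1
    · intro v hv w hw
      simp only [Finset.mem_filter, hP] at hv hw
      exact hwid τ hτ 1 v hv.1.1 w hw.1.1
    · intro v hv
      rw [Finset.mem_filter] at hv
      refine ⟨_, _, hv.2.1, hv.2.2, fun w hw hne => ?_⟩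
      have hwV : w ∈ V := (Finset.mem_filter.1 (Finset.mem_filter.1 hw).1).1
      have h := hab v hv.1 w hwV hne
      have hσ' : (σ : ℝ) ^ 2 = 1 := by exact_mod_cast hσ
      have hτ' : (τ : ℝ) ^ 2 = 1 := by exact_mod_cast hτ
      have e : ∀ u : Fin 2 → ℤ, (ab v).1 * σ * ((σ * u 0 : ℤ) : ℝ) + (ab v).2 * τ * ((τ * u 1 : ℤ) : ℝ)
          = (ab v).1 * u 0 + (ab v).2 * u 1 := by
        intro u
        push_cast
        linear_combination (ab v).1 * u 0 * hσ' + (ab v).2 * u 1 * hτ'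
      rw [e, e]
      exact h
  have hcover : P ⊆
      ((P.filter fun v => 0 ≤ (ab v).1 * (1 : ℤ) ∧ 0 ≤ (ab v).2 * (1 : ℤ)) ∪
       (P.filter fun v => 0 ≤ (ab v).1 * (1 : ℤ) ∧ 0 ≤ (ab v).2 * (-1 : ℤ))) ∪
      ((P.filter fun v => 0 ≤ (ab v).1 * (-1 : ℤ) ∧ 0 ≤ (ab v).2 * (1 : ℤ)) ∪
       (P.filter fun v => 0 ≤ (ab v).1 * (-1 : ℤ) ∧ 0 ≤ (ab v).2 * (-1 : ℤ))) := by
    intro v hv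
    simp only [Finset.mem_union, Finset.mem_filter, hv, true_and]
    push_cast
    rcases le_total 0 (ab v).1 with h1 | h1 <;> rcases le_total 0 (ab v).2 with h2 | h2 <;>
      simp [h1, h2]
  have h1 := (Finset.card_le_card hcover).trans ((Finset.card_union_le _ _).trans
    (add_le_add (Finset.card_union_le _ _) (Finset.card_union_le _ _)))
  have k1 := key 1 1 (by norm_num) (by norm_num)
  have k2 := key 1 (-1) (by norm_num) (by norm_num)
  have k3 := key (-1) 1 (by norm_num) (by norm_num)
  have k4 := key (-1) (-1) (by norm_num) (by norm_num)
  have h2 : (Nat.card (Set.extremePoints ℝ K) : ℝ) ≤ _ := Nat.cast_le.2 (hcardP.trans h1)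
  push_cast at h2 k1 k2 k3 k4
  linarith

end
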